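/- Let U be a commutative ring of characteristic 2 with derivation ∂. Then the Wronskian V^{0,1,2,3,4}(u₁,…,u₅) = det(∂ⁱuⱼ)_{0≤i≤4} is a 5-Lie multiplication: it is alternating and satisfies the Filippov identity V(a₁,…,a₄, V(b₁,…,b₅)) = Σ_{i=1}^5 V(b₁,…,b_{i−1}, V(a₁,…,a₄,bᵢ), b_{i+1},…,b₅). -/

import Mathlib

/-- The Wronskian `V^{0,1,2,3,4}(u₁,…,u₅) = det(D^{i-1} u_j)`. -/
def V01234 {U : Type*} [CommRing U] (D : U → U) (u : Fin 5 → U) : U :=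
  (Matrix.of fun r s : Fin 5 => D^[(r : ℕ)] (u s)).det

/-!
For fixed `a`, the map `x ↦ V(a, x)` is in characteristic two the operator
`c₀ + c₁∂ + c₂∂² + ∂ ∘ c₃∂³`, because the minor `V^{0,1,2,4}(a)` is the derivative of
`c₃ = V^{0,1,2,3}(a)`. The Filippov identity says that this operator is a derivation of `V`, a
condition additive in the operator, so the four summands can be treated separately. Trading
substitutions in columns for substitutions in rows and applying the Leibniz rule gives
`∑ⱼ V(…, c ∂ᵏ bⱼ, …) = ∑ᵢ ∂ⁱc · ∑ᵣ (r choose i) V^{…,r+k-i,…}(b)`.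
The terms with `i = 0` add up to `c ∂ᵏ V(b)` whenever `∂ᵏ` is itself a derivation, as it is for
`k = 1, 2, 4`, and the remaining ones vanish modulo 2 or cancel.
-/

open Finset Function

section Derivation

variable {R U : Type*} [CommSemiring R] [CommRing U] [Algebra R U] (D : Derivation R U U)

theorem derivation_iterate_mul (n : ℕ) (a b : U) :
    D^[n] (a * b) = ∑ p ∈ antidiagonal n, (n.choose p.1 : U) * (D^[p.1] a * D^[p.2] b) := by
  induction n with
  | zero => simp
  | succ n ih =>
    rw [sum_antidiagonal_choose_succ_mul (fun i j => D^[i] a * D^[j] b), iterate_succ_apply', ih,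
      map_sum, ← sum_add_distrib]
    refine sum_congr rfl fun p hp => ?_
    rw [← Nat.choose_symm_of_eq_add (HasAntidiagonal.mem_antidiagonal.1 hp).symm]
    simp only [D.leibniz, D.map_natCast, iterate_succ_apply', smul_eq_mul]
    ring

theorem derivation_iterate_prime_mul {p : ℕ} (hp : p.Prime) (hpU : (p : U) = 0) (a b : U) :
    D^[p] (a * b) = a * D^[p] b + b * D^[p] a := by
  rw [derivation_iterate_mul, sum_eq_add_of_mem (0, p) (p, 0) (by simp) (by simp)
    (by simp [hp.ne_zero])]
  · simp [mul_comm b]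
  · rintro ⟨i, j⟩ hij ⟨hi, hj⟩
    rw [HasAntidiagonal.mem_antidiagonal] at hij
    obtain ⟨m, hm⟩ : p ∣ p.choose i := hp.dvd_choose_self (by grind) (by grind)
    simp [hm, hpU]

theorem exists_derivation_coe_eq_iterate_prime_pow {p : ℕ} (hp : p.Prime) (hpU : (p : U) = 0)
    (m : ℕ) : ∃ E : Derivation R U U, ⇑E = D^[p ^ m] := by
  induction m with
  | zero => exact ⟨D, by simp⟩
  | succ m ih =>
    obtain ⟨E, hE⟩ := ih
    refine ⟨Derivation.mk' ((E : U →ₗ[R] U) ^ p) fun a b => ?_, ?_⟩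
    · simpa [Module.End.pow_apply] using derivation_iterate_prime_mul E hp hpU a b
    · ext x
      simp [Module.End.pow_apply, pow_succ, iterate_mul, hE]

theorem derivation_prod {ι : Type*} [DecidableEq ι] (s : Finset ι) (f : ι → U) :
    D (∏ i ∈ s, f i) = ∑ i ∈ s, ∏ j ∈ s, update f i (D (f i)) j := by
  induction s using Finset.induction_on with
  | empty => simp
  | insert i s hi ih =>
    have hne : ∀ j ∈ s, j ≠ i := fun j hj h => hi (h ▸ hj)
    rw [prod_insert hi, D.leibniz, ih, sum_insert hi, prod_insert hi, update_self, add_comm,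
      smul_eq_mul, smul_eq_mul, mul_sum, mul_comm]
    congr 1
    · exact congrArg _ (prod_congr rfl fun j hj => (update_of_ne (hne j hj) _ _).symm)
    · refine sum_congr rfl fun j hj => ?_
      rw [prod_insert hi, update_of_ne (hne j hj).symm]

theorem derivation_det {ι : Type*} [Fintype ι] [DecidableEq ι] (M : Matrix ι ι U) :
    D M.det = ∑ i, (M.updateRow i fun j => D (M i j)).det := by
  simp only [← Matrix.det_transpose M, ← Matrix.det_transpose (Matrix.updateRow M _ _),
    Matrix.det_apply, map_sum, Units.smul_def, map_zsmul, derivation_prod, smul_sum]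
  rw [sum_comm]
  refine sum_congr rfl fun i _ => sum_congr rfl fun σ _ => congrArg _ (prod_congr rfl fun j _ => ?_)
  rcases eq_or_ne j i with rfl | h <;> simp [*]

end Derivation

theorem sum_det_updateCol_eq_sum_det_updateRow {ι U : Type*} [Fintype ι] [DecidableEq ι]
    [CommRing U] (A B : Matrix ι ι U) :
    ∑ j, (A.updateCol j (B.col j)).det = ∑ i, (A.updateRow i (B i)).det := by
  simp only [← Matrix.cramer_apply, ← Matrix.cramer_transpose_apply,
    Matrix.cramer_eq_adjugate_mulVec, Matrix.mulVec, dotProduct, ← Matrix.adjugate_transpose]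
  exact sum_comm

/-- `T` is a derivation of the `n`-ary operation `V`. The Filippov identity says that every left
multiplication `x ↦ V (a₁, …, aₙ₋₁, x)` is a derivation of `V` in this sense. -/
def IsNAryDerivation {ι U : Type*} [Fintype ι] [DecidableEq ι] [AddCommMonoid U]
    (V : (ι → U) → U) (T : U → U) : Prop :=
  ∀ u, T (V u) = ∑ j, V (update u j (T (u j)))

/-- The Wronskian `V^{k₁,…,kₙ}(u₁,…,uₙ) = det (D^{kᵢ} uⱼ)` with arbitrary orders `kᵢ`, which need
be neither consecutive nor increasing. -/
def wronskian {ι U : Type*} [Fintype ι] [DecidableEq ι] [CommRing U]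
    (D : U → U) (k : ι → ℕ) (u : ι → U) : U :=
  (Matrix.of fun i j => D^[k i] (u j)).det

section Wronskian

variable {ι U : Type*} [Fintype ι] [DecidableEq ι] [CommRing U] (D : U → U)

theorem wronskian_eq_zero_of_arg_eq (k : ι → ℕ) {u : ι → U} {i j : ι} (hij : i ≠ j)
    (h : u i = u j) : wronskian D k u = 0 :=
  Matrix.det_zero_of_column_eq hij fun r => congrArg D^[k r] h

theorem wronskian_eq_zero_of_not_injective {k : ι → ℕ} (hk : ¬ Injective k) (u : ι → U) :
    wronskian D k u = 0 := by
  obtain ⟨i, j, h, hij⟩ := not_injective_iff.1 hk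
  exact Matrix.det_zero_of_row_eq hij (by ext s; simp [h])

theorem wronskian_comp_perm (σ : Equiv.Perm ι) (k : ι → ℕ) (u : ι → U) :
    wronskian D (k ∘ σ) u = (Equiv.Perm.sign σ : ℤ) * wronskian D k u :=
  Matrix.det_permute σ (Matrix.of fun i j => D^[k i] (u j))

theorem wronskian_comp_swap (h2 : (2 : U) = 0) (k : ι → ℕ) (u : ι → U) {i j : ι} (hij : i ≠ j) :
    wronskian D (k ∘ Equiv.swap i j) u = wronskian D k u := by
  rw [wronskian_comp_perm, Equiv.Perm.sign_swap hij, Units.val_neg, Units.val_one]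
  push_cast
  linear_combination -wronskian D k u * h2

theorem wronskian_update_arg (k : ι → ℕ) (u : ι → U) (j : ι) (x : U) :
    wronskian D k (update u j x) =
      ((Matrix.of fun i j => D^[k i] (u j)).updateCol j fun i => D^[k i] x).det := by
  refine congrArg Matrix.det (Matrix.ext fun r s => ?_)
  rcases eq_or_ne s j with rfl | h <;> simp [*]

theorem wronskian_update_order (k : ι → ℕ) (u : ι → U) (i : ι) (m : ℕ) :
    wronskian D (update k i m) u =
      ((Matrix.of fun i j => D^[k i] (u j)).updateRow i fun j => D^[m] (u j)).det := by
  refine congrArg Matrix.det (Matrix.ext fun r s => ?_)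
  rcases eq_or_ne r i with rfl | h <;> simp [*]

theorem sum_wronskian_update_arg (k : ι → ℕ) (u : ι → U) (T : U → U) :
    ∑ j, wronskian D k (update u j (T (u j))) =
      ∑ i, ((Matrix.of fun i j => D^[k i] (u j)).updateRow i fun j => D^[k i] (T (u j))).det := by
  simp only [wronskian_update_arg]
  exact sum_det_updateCol_eq_sum_det_updateRow _ (Matrix.of fun i j => D^[k i] (T (u j)))

theorem wronskian_update_order_eq_zero {n : ℕ} (u : Fin n → U) {r : Fin n} {m : ℕ} (hm : m < n)
    (hr : m ≠ r) : wronskian D (update Fin.val r m) u = 0 := by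
  have hne : r ≠ ⟨m, hm⟩ := fun h => hr (congrArg Fin.val h).symm
  exact wronskian_eq_zero_of_not_injective D (fun h => hne (h (by simp [hne.symm]))) u

theorem wronskian_snoc {n : ℕ} (a : Fin n → U) (x : U) :
    wronskian D Fin.val (Fin.snoc a x : Fin (n + 1) → U) =
      ∑ i : Fin (n + 1),
        (-1) ^ (i + n : ℕ) * wronskian D (Fin.val ∘ i.succAbove) a * D^[i] x := by
  rw [wronskian, Matrix.det_succ_column _ (Fin.last n)]
  refine sum_congr rfl fun i _ => ?_
  have hminor : (Matrix.of fun r s : Fin (n + 1) =>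
      D^[r] ((Fin.snoc a x : Fin (n + 1) → U) s)).submatrix i.succAbove (Fin.last n).succAbove =
      Matrix.of fun r s => D^[i.succAbove r] (a s) := by
    ext r s; simp
  rw [hminor, Matrix.of_apply, Fin.snoc_last, Fin.val_last, mul_right_comm]
  rfl

/-- The sum `∑ᵣ (r choose i) V^{0,…,r+p,…,n-1}`, in which the `r`-th order is raised by `p`. These
sums are the coefficients obtained on substituting `c ∂ᵏ` into the Wronskian. For `i = 0` it is
the action of the power sum `x₀ᵖ + ⋯ + xₙ₋₁ᵖ` when `xᵣ` is read as raising the `r`-th order. -/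
def shiftedWronskian {n : ℕ} (i p : ℕ) (u : Fin n → U) : U :=
  ∑ r : Fin n, ((r : ℕ).choose i : U) * wronskian D (update Fin.val r (r + p)) u

theorem shiftedWronskian_zero_right {n : ℕ} (i : ℕ) (u : Fin n → U) :
    shiftedWronskian D i 0 u = n.choose (i + 1) * wronskian D Fin.val u := by
  have hchoose : ∑ r : Fin n, (r : ℕ).choose i = n.choose (i + 1) := by
    rw [Fin.sum_univ_eq_sum_range (fun r => r.choose i) n]
    clear u
    induction n with
    | zero => simp
    | succ n ih => rw [sum_range_succ, ih, Nat.choose_succ_succ', add_comm]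
  simp only [shiftedWronskian, add_zero, update_eq_self, ← sum_mul, ← hchoose, Nat.cast_sum]

theorem shiftedWronskian_one {n : ℕ} (i : ℕ) (u : Fin (n + 1) → U) :
    shiftedWronskian D i 1 u =
      n.choose i * wronskian D (update Fin.val (Fin.last n) (n + 1)) u := by
  rw [shiftedWronskian, Fin.sum_univ_castSucc, sum_eq_zero, zero_add, Fin.val_last]
  intro r _
  rw [wronskian_update_order_eq_zero D u (by simp) (by simp), mul_zero]

theorem derivation_wronskian {R : Type*} [CommSemiring R] [Algebra R U]
    (E : Derivation R U U) {p : ℕ} (hE : ⇑E = D^[p]) (k : ι → ℕ) (u : ι → U) :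
    E (wronskian D k u) = ∑ i, wronskian D (update k i (k i + p)) u := by
  simp only [wronskian, derivation_det]
  refine sum_congr rfl fun i _ => ?_
  rw [← wronskian, wronskian_update_order]
  simp only [hE, Matrix.of_apply, ← iterate_add_apply, add_comm p]

theorem derivation_wronskian_val {n : ℕ} {R : Type*} [CommSemiring R] [Algebra R U]
    (E : Derivation R U U) {p : ℕ} (hE : ⇑E = D^[p]) (u : Fin n → U) :
    E (wronskian D Fin.val u) = shiftedWronskian D 0 p u := by
  simp [derivation_wronskian D E hE, shiftedWronskian]

end Wronskian

section AdditiveWronskian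

variable {ι U F : Type*} [Fintype ι] [DecidableEq ι] [CommRing U] [FunLike F U U]
  [AddMonoidHomClass F U U] (D : F)

theorem wronskian_update_arg_add (k : ι → ℕ) (u : ι → U) (j : ι) (x y : U) :
    wronskian D k (update u j (x + y)) =
      wronskian D k (update u j x) + wronskian D k (update u j y) := by
  simp only [wronskian_update_arg, iterate_map_add]
  exact Matrix.det_updateCol_add _ _ _ _

theorem IsNAryDerivation.wronskian_add {k : ι → ℕ} {S T : U → U}
    (hS : IsNAryDerivation (wronskian D k) S) (hT : IsNAryDerivation (wronskian D k) T) :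
    IsNAryDerivation (wronskian D k) fun x => S x + T x := fun u => by
  simp only [wronskian_update_arg_add, sum_add_distrib, ← hS u, ← hT u]

end AdditiveWronskian

section DerivationWronskian

variable {R U : Type*} [CommSemiring R] [CommRing U] [Algebra R U] (D : Derivation R U U)

theorem derivation_wronskian_val_succ {n : ℕ} (u : Fin (n + 1) → U) :
    D (wronskian D Fin.val u) = wronskian D (update Fin.val (Fin.last n) (n + 1)) u := by
  rw [derivation_wronskian_val D D (p := 1) rfl, shiftedWronskian_one, Nat.choose_zero_right,
    Nat.cast_one, one_mul]

theorem det_updateRow_iterate_mul_iterate {n : ℕ} (c : U) (k : ℕ) (u : Fin n → U) (r : Fin n) :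
    ((Matrix.of fun i j : Fin n => D^[i] (u j)).updateRow r fun j => D^[r] (c * D^[k] (u j))).det =
      ∑ i ∈ range (r + 1),
        (r : ℕ).choose i * D^[i] c * wronskian D (update Fin.val r (r - i + k)) u := by
  have hrow : (fun j => D^[r] (c * D^[k] (u j))) =
      ∑ i ∈ range (r + 1), ((r : ℕ).choose i * D^[i] c) • fun j => D^[r - i + k] (u j) := by
    ext j
    simp only [derivation_iterate_mul, Nat.sum_antidiagonal_eq_sum_range_succ_mk,
      Finset.sum_apply, Pi.smul_apply, smul_eq_mul, mul_assoc, iterate_add_apply]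
  rw [hrow, ← Matrix.cramer_transpose_apply, map_sum, Finset.sum_apply]
  refine sum_congr rfl fun i _ => ?_
  rw [map_smul, Pi.smul_apply, Matrix.cramer_transpose_apply, wronskian_update_order, smul_eq_mul]

theorem sum_wronskian_update_mul_iterate {n : ℕ} (c : U) (k : ℕ) (u : Fin n → U) :
    ∑ j, wronskian D Fin.val (update u j (c * D^[k] (u j))) =
      ∑ i ∈ range (k + 1), D^[i] c * shiftedWronskian D i (k - i) u := by
  rw [sum_wronskian_update_arg D _ u fun x => c * D^[k] x]
  simp only [det_updateRow_iterate_mul_iterate, shiftedWronskian, mul_sum]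
  rw [sum_comm]
  refine sum_congr rfl fun r _ => ?_
  refine sum_congr_of_eq_on_inter (fun i hi hik => ?_) (fun i _ hir => ?_) fun i hi hik => ?_
  · rw [mem_range] at hi hik
    rw [wronskian_update_order_eq_zero D u (by lia) (by lia), mul_zero]
  · rw [mem_range] at hir
    rw [Nat.choose_eq_zero_of_lt (by lia), Nat.cast_zero, zero_mul, mul_zero]
  · rw [mem_range] at hi hik
    rw [show (r : ℕ) - i + k = r + (k - i) by lia]
    ring

theorem iterate_prime_pow_wronskian_val {p : ℕ} (hp : p.Prime) (hpU : (p : U) = 0) (m : ℕ)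
    {n : ℕ} (u : Fin n → U) :
    D^[p ^ m] (wronskian D Fin.val u) = shiftedWronskian D 0 (p ^ m) u := by
  obtain ⟨E, hE⟩ := exists_derivation_coe_eq_iterate_prime_pow D hp hpU m
  rw [← hE, derivation_wronskian_val D E hE]

theorem isNAryDerivation_wronskian_const_mul {n : ℕ} (hn : (n : U) = 1) (c : U) :
    IsNAryDerivation (wronskian D (Fin.val : Fin n → ℕ)) fun x => c * x := fun u => by
  have h := sum_wronskian_update_mul_iterate D c 0 u
  simp only [iterate_zero_apply, zero_add, sum_range_one, Nat.sub_zero,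
    shiftedWronskian_zero_right, Nat.choose_one_right, hn, one_mul] at h
  exact h.symm

theorem isNAryDerivation_wronskian_const_mul_derivation {n : ℕ} (hn : (n.choose 2 : U) = 0)
    (c : U) : IsNAryDerivation (wronskian D (Fin.val : Fin n → ℕ)) fun x => c * D x := fun u => by
  have h := sum_wronskian_update_mul_iterate D c 1 u
  simp only [iterate_one, sum_range_succ, range_zero, sum_empty, zero_add, Nat.sub_self,
    Nat.sub_zero, iterate_zero_apply, shiftedWronskian_zero_right, Nat.reduceAdd, hn, zero_mul,
    mul_zero, add_zero] at h
  simp only [h, derivation_wronskian_val D D (iterate_one D).symm]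

end DerivationWronskian

section CharTwo

variable {R U : Type*} [CommSemiring R] [CommRing U] [Algebra R U]

theorem iterate_two_wronskian_val (h2 : (2 : U) = 0) (D : Derivation R U U) {n : ℕ}
    (u : Fin n → U) : D^[2] (wronskian D Fin.val u) = shiftedWronskian D 0 2 u :=
  iterate_prime_pow_wronskian_val D Nat.prime_two (mod_cast h2) 1 u

theorem isNAryDerivation_wronskian_const_mul_iterate_two (h2 : (2 : U) = 0)
    (D : Derivation R U U) {n : ℕ} (hn : (n : U) = 0) (hn' : ((n + 1).choose 3 : U) = 0) (c : U) :
    IsNAryDerivation (wronskian D (Fin.val : Fin (n + 1) → ℕ)) fun x => c * D^[2] x := fun u => by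
  have h := sum_wronskian_update_mul_iterate D c 2 u
  simp only [sum_range_succ, range_zero, sum_empty, zero_add, Nat.sub_self, Nat.reduceSub,
    Nat.sub_zero, iterate_zero_apply, shiftedWronskian_zero_right, shiftedWronskian_one,
    Nat.choose_one_right, Nat.reduceAdd, hn, hn', zero_mul, mul_zero, add_zero] at h
  simp only [h, iterate_two_wronskian_val h2]

theorem iterate_three_wronskian_val_five (h2 : (2 : U) = 0) (D : Derivation R U U)
    (u : Fin 5 → U) :
    D^[3] (wronskian D Fin.val u) = shiftedWronskian D 0 3 u + shiftedWronskian D 1 3 u := by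
  have hD (k : Fin 5 → ℕ) := derivation_wronskian D D (iterate_one D).symm k u
  have hsq : D^[2] (wronskian D Fin.val u) =
      wronskian D (update Fin.val 3 5) u + wronskian D (update Fin.val 4 6) u := by
    rw [iterate_two_wronskian_val h2, shiftedWronskian, Fin.sum_univ_five]
    simp (disch := decide) [wronskian_eq_zero_of_not_injective]
  have hswap23 : wronskian D (update (update Fin.val 3 5) 2 3) u =
      wronskian D (update Fin.val 2 5) u := by
    rw [← wronskian_comp_swap D h2 _ u (show (2 : Fin 5) ≠ 3 by decide)]
    exact congrArg (wronskian D · u) (by decide)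
  have hswap34 : wronskian D (update (update Fin.val 4 6) 3 4) u =
      wronskian D (update Fin.val 3 6) u := by
    rw [← wronskian_comp_swap D h2 _ u (show (3 : Fin 5) ≠ 4 by decide)]
    exact congrArg (wronskian D · u) (by decide)
  have h35 : D (wronskian D (update Fin.val 3 5) u) =
      wronskian D (update Fin.val 2 5) u + wronskian D (update Fin.val 3 6) u := by
    rw [hD, Fin.sum_univ_five, ← hswap23]
    simp (disch := decide) [wronskian_eq_zero_of_not_injective]
  have h46 : D (wronskian D (update Fin.val 4 6) u) =
      wronskian D (update Fin.val 3 6) u + wronskian D (update Fin.val 4 7) u := by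
    rw [hD, Fin.sum_univ_five, ← hswap34]
    simp (disch := decide) [wronskian_eq_zero_of_not_injective]
  rw [iterate_succ_apply', hsq, map_add, h35, h46]
  simp (disch := decide) only [shiftedWronskian, Fin.sum_univ_five, Fin.isValue,
    Fin.coe_ofNat_eq_mod, wronskian_eq_zero_of_not_injective, Nat.reduceMod, Nat.reduceAdd,
    Nat.choose_zero_right, Nat.choose_one_right, Nat.cast_ofNat, Nat.cast_one, mul_zero, zero_add]
  linear_combination -(wronskian D (update Fin.val 2 5) u + wronskian D (update Fin.val 3 6) u +
    2 * wronskian D (update Fin.val 4 7) u) * h2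

theorem isNAryDerivation_wronskian_five_derivation_mul_iterate_three (h2 : (2 : U) = 0)
    (D : Derivation R U U) (c : U) :
    IsNAryDerivation (wronskian D (Fin.val : Fin 5 → ℕ)) fun x => D (c * D^[3] x) := fun u => by
  -- Neither `c ∂⁴` nor `(∂c) ∂³` is a derivation of the Wronskian: each is off by
  -- `∂c · ∑ᵣ r V^{…,r+3,…} + ∂²c · ∑ᵣ r V^{…,r+2,…}`, and in characteristic two these cancel.
  have hleib (x : U) : D (c * D^[3] x) = c * D^[4] x + D c * D^[3] x := by
    rw [D.leibniz, ← iterate_succ_apply' D, smul_eq_mul, smul_eq_mul, mul_comm (D c)]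
  have hpow4 : D^[4] (wronskian D Fin.val u) = shiftedWronskian D 0 4 u :=
    iterate_prime_pow_wronskian_val D Nat.prime_two (mod_cast h2) 2 u
  have hsub4 := sum_wronskian_update_mul_iterate D c 4 u
  have hsub3 := sum_wronskian_update_mul_iterate D (D c) 3 u
  have h22 : shiftedWronskian D 2 2 u = shiftedWronskian D 1 2 u := by
    simp (disch := decide) only [shiftedWronskian, Fin.sum_univ_five, Fin.isValue,
      Fin.coe_ofNat_eq_mod, wronskian_eq_zero_of_not_injective, Nat.reduceMod, Nat.reduceAdd,
      Nat.choose, Nat.cast_ofNat, mul_zero, zero_add]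
    linear_combination wronskian D (update Fin.val 4 6) u * h2
  simp only [sum_range_succ, range_zero, sum_empty, zero_add, Nat.sub_self, Nat.reduceSub,
    Nat.sub_zero, iterate_zero_apply, ← iterate_succ_apply D, Nat.succ_eq_add_one, Nat.reduceAdd,
    shiftedWronskian_zero_right, shiftedWronskian_one, h22] at hsub3 hsub4
  simp only [hleib, wronskian_update_arg_add, sum_add_distrib, hsub3, hsub4]
  rw [hpow4, iterate_three_wronskian_val_five h2]
  simp only [iterate_one, Nat.choose, Nat.reduceAdd, Nat.cast_ofNat, Nat.cast_one]
  linear_combination -(D^[2] c * shiftedWronskian D 1 2 u +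
    5 * D^[3] c * wronskian D (update Fin.val (Fin.last 4) 5) u +
    3 * D^[4] c * wronskian D Fin.val u) * h2

theorem wronskian_snoc_four (h2 : (2 : U) = 0) (D : Derivation R U U) (a : Fin 4 → U) (x : U) :
    wronskian D Fin.val (Fin.snoc a x : Fin 5 → U) =
      wronskian D (Fin.val ∘ Fin.succAbove 0) a * x +
      wronskian D (Fin.val ∘ Fin.succAbove 1) a * D x +
      wronskian D (Fin.val ∘ Fin.succAbove 2) a * D^[2] x +
      D (wronskian D Fin.val a * D^[3] x) := by
  have h3 : (Fin.val ∘ Fin.succAbove 3 : Fin 4 → ℕ) = update Fin.val (Fin.last 3) 4 := by decide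
  have h4 : (Fin.val ∘ Fin.succAbove 4 : Fin 4 → ℕ) = Fin.val := by decide
  have hsign : (-1 : U) = 1 := by linear_combination -h2
  rw [wronskian_snoc, Fin.sum_univ_five, D.leibniz, derivation_wronskian_val_succ, h3, h4,
    ← iterate_succ_apply' D]
  simp only [hsign, one_pow, one_mul, smul_eq_mul]
  change _ * D^[0] x + _ * D^[1] x + _ * D^[2] x + _ * D^[3] x + _ * D^[4] x = _
  rw [iterate_zero_apply, iterate_one]
  ring

end CharTwo

theorem V01234_eq_wronskian {U : Type*} [CommRing U] (D : U → U) :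
    V01234 D = wronskian D Fin.val :=
  rfl

/-- In a commutative ring `U` of characteristic 2 with derivation `D`, the Wronskian
`V^{0,1,2,3,4}` is a 5-Lie multiplication: it is alternating and satisfies the
Filippov identity. -/
theorem stmt_12 (U : Type*) [CommRing U] (h2 : (2 : U) = 0) (D : U → U)
    (hadd : ∀ a b : U, D (a + b) = D a + D b)
    (hleib : ∀ a b : U, D (a * b) = D a * b + a * D b) :
    (∀ (u : Fin 5 → U) (i j : Fin 5), i ≠ j → u i = u j → V01234 D u = 0) ∧
    (∀ (a : Fin 4 → U) (b : Fin 5 → U),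
      V01234 D (Fin.snoc a (V01234 D b)) =
        ∑ i : Fin 5, V01234 D (Function.update b i (V01234 D (Fin.snoc a (b i))))) := by
  obtain ⟨E, rfl⟩ : ∃ E : Derivation ℤ U U, ⇑E = D :=
    ⟨Derivation.mk' (AddMonoidHom.mk' D hadd).toIntLinearMap fun a b => by
      simp [hleib, mul_comm, add_comm], rfl⟩
  rw [V01234_eq_wronskian]
  refine ⟨fun u i j hij h => wronskian_eq_zero_of_arg_eq E _ hij h, fun a => ?_⟩
  change IsNAryDerivation _ fun x => wronskian E Fin.val (Fin.snoc a x : Fin 5 → U)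
  have h5 : ((5 : ℕ) : U) = 1 := by push_cast; linear_combination 2 * h2
  have h4 : ((4 : ℕ) : U) = 0 := by push_cast; linear_combination 2 * h2
  have h10 : ((10 : ℕ) : U) = 0 := by push_cast; linear_combination 5 * h2
  simp only [wronskian_snoc_four h2]
  exact (((isNAryDerivation_wronskian_const_mul E h5 _).wronskian_add E
    (isNAryDerivation_wronskian_const_mul_derivation E (n := 5) h10 _)).wronskian_add E
    (isNAryDerivation_wronskian_const_mul_iterate_two h2 E h4 h10 _)).wronskian_add E
    (isNAryDerivation_wronskian_five_derivation_mul_iterate_three h2 E _)
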